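/- Let f be a cellular automaton on A^ℤ and suppose that the restriction of f to ω̃(f) is eventually oblique, i.e., for some n ∈ ℕ the map f^n restricted to ω̃(f) has a neighborhood contained in (−∞, −1] or in [1, ∞) (there exist integers a ≤ b with b ≤ −1 or a ≥ 1 such that for all x ∈ ω̃(f), f^n(x)_0 is determined by x_{[a,b]}). Then the language L(ω̃(f)) is a Π⁰₂ set of words. -/

import Mathlib

open Filter Set Function

namespace Gls

variable {A : Type*}

/-- The left shift map on `A^ℤ`. -/
def shift (x : ℤ → A) : ℤ → A := fun i => x (i + 1)

/-- A cellular automaton: a continuous shift-commuting self-map of the full shift. -/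
def IsCA [TopologicalSpace A] (f : (ℤ → A) → (ℤ → A)) : Prop :=
  Continuous f ∧ f ∘ shift = shift ∘ f

/-- The set of limit points of the forward orbit of `x` under `f`. -/
def omegaSet [TopologicalSpace A] (f : (ℤ → A) → (ℤ → A)) (x : ℤ → A) : Set (ℤ → A) :=
  {y | MapClusterPt y atTop fun t => f^[t] x}

/-- The realm of attraction of `Y`. -/
def realm [TopologicalSpace A] (f : (ℤ → A) → (ℤ → A)) (Y : Set (ℤ → A)) : Set (ℤ → A) :=
  {x | omegaSet f x ⊆ Y}

/-- The generic limit set: the intersection of all closed sets whose realm is comeager. -/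
def genLimitSet [TopologicalSpace A] (f : (ℤ → A) → (ℤ → A)) : Set (ℤ → A) :=
  ⋂₀ {C | IsClosed C ∧ realm f C ∈ residual (ℤ → A)}

/-- The word `x_{[i, i+n)}` of length `n` read in the configuration `x` from position `i`. -/
def word (x : ℤ → A) (i : ℤ) (n : ℕ) : List A :=
  (List.range n).map fun k => x (i + k)

/-- The cylinder set `[w]_i`. -/
def cylinder (w : List A) (i : ℤ) : Set (ℤ → A) := {x | word x i w.length = w}

/-- The language of `X`: all finite words occurring in points of `X`. -/
def lang (X : Set (ℤ → A)) : Set (List A) :=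
  {w | ∃ x ∈ X, ∃ i : ℤ, word x i w.length = w}


/-- The arithmetical hierarchy over `ℕ`: `NatSigma 0` is the class of computable
predicates, and a predicate is `NatSigma (n+1)` (i.e. `Σ⁰ₙ₊₁`) if it is of the form
`{a | ∃ k, (a, k) ∈ R}` for a `Π⁰ₙ` relation `R` (i.e. a relation whose complement is `Σ⁰ₙ`). -/
def NatSigma : ℕ → (ℕ → Prop) → Prop
  | 0 => fun P => ComputablePred P
  | (n + 1) => fun P =>
      ∃ R : ℕ → Prop, NatSigma n (fun a => ¬ R a) ∧ ∀ a, P a ↔ ∃ k, R (Nat.pair a k)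

/-- A set of words is `Σ⁰ₙ` if, identifying words with natural numbers via the canonical
computable encoding, it is a `Σ⁰ₙ` subset of `ℕ`. -/
def SigmaLang {A : Type*} [Primcodable A] (n : ℕ) (P : Set (List A)) : Prop :=
  NatSigma n (fun m => ∃ w : List A, Encodable.encode w = m ∧ w ∈ P)

/-- A set of words is `Π⁰ₙ` if its complement is `Σ⁰ₙ`. -/
def PiLang {A : Type*} [Primcodable A] (n : ℕ) (P : Set (List A)) : Prop :=
  SigmaLang n {w | w ∉ P}

/-- The restriction of `f` to `X` is eventually oblique: for some `n`, the map `f^n`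
restricted to `X` has a neighborhood `[a, b]` contained in `(-∞, -1]` or in `[1, ∞)`,
i.e. for `x ∈ X`, the symbol `f^n(x)_0` only depends on `x_{[a,b]}`. -/
def EventuallyOblique {A : Type*} (f : (ℤ → A) → (ℤ → A)) (X : Set (ℤ → A)) : Prop :=
  ∃ (n : ℕ) (a b : ℤ), a ≤ b ∧ (b ≤ -1 ∨ 1 ≤ a) ∧
    ∀ x ∈ X, ∀ y ∈ X, (∀ i : ℤ, a ≤ i → i ≤ b → x i = y i) → f^[n] x 0 = f^[n] y 0

section Helpers

open scoped Topology

/-- agreement cylinder on `[-c, c]` -/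
def Bx (p : ℤ → A) (c : ℕ) : Set (ℤ → A) := {x | ∀ i : ℤ, -(c : ℤ) ≤ i → i ≤ c → x i = p i}

lemma Bx_self (p : ℤ → A) (c : ℕ) : p ∈ Bx p c := fun _ _ _ => rfl

lemma Bx_mono (p : ℤ → A) {c d : ℕ} (h : c ≤ d) : Bx p d ⊆ Bx p c :=
  fun _ hx i h1 h2 => hx i (by omega) (by omega)

lemma Bx_open [TopologicalSpace A] [DiscreteTopology A] (p : ℤ → A) (c : ℕ) :
    IsOpen (Bx p c) := by
  have : Bx p c = ⋂ i ∈ Set.Icc (-(c : ℤ)) c, (fun x : ℤ → A => x i) ⁻¹' {p i} := by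
    ext x; simp [Bx]
  rw [this]
  exact (Set.finite_Icc _ _).isOpen_biInter fun i _ =>
    (isOpen_discrete _).preimage (continuous_apply i)

lemma exists_Bx [TopologicalSpace A] {U : Set (ℤ → A)} (hU : IsOpen U)
    {p : ℤ → A} (hp : p ∈ U) : ∃ c : ℕ, Bx p c ⊆ U := by
  obtain ⟨I, u, hu, hI⟩ := isOpen_pi_iff.1 hU p hp
  refine ⟨I.sup Int.natAbs, fun x hx => hI ?_⟩
  intro i hi
  have h1 : i.natAbs ≤ I.sup Int.natAbs := Finset.le_sup (f := Int.natAbs) hi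
  have := hx i (by omega) (by omega)
  rw [this]; exact (hu i hi).2

/-- `W` depends only on coordinates in `[-m, m]`. -/
def DepOn (W : Set (ℤ → A)) (m : ℕ) : Prop := ∀ x ∈ W, Bx x m ⊆ W

lemma DepOn.compl {W : Set (ℤ → A)} {m : ℕ} (h : DepOn W m) : DepOn Wᶜ m := by
  intro x hx y hy hyW
  exact hx (h y hyW fun i h1 h2 => (hy i h1 h2).symm)

lemma DepOn.isOpen [TopologicalSpace A] [DiscreteTopology A] {W : Set (ℤ → A)} {m : ℕ}
    (h : DepOn W m) : IsOpen W := by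
  rw [isOpen_iff_forall_mem_open]
  exact fun x hx => ⟨Bx x m, h x hx, Bx_open x m, Bx_self x m⟩

lemma DepOn.isClosed [TopologicalSpace A] [DiscreteTopology A] {W : Set (ℤ → A)} {m : ℕ}
    (h : DepOn W m) : IsClosed W := ⟨h.compl.isOpen⟩

/-- eventually avoiding `W` uniformly on `V` -/
def Avoid (f : (ℤ → A) → (ℤ → A)) (W V : Set (ℤ → A)) : Prop :=
  ∃ T : ℕ, ∀ t ≥ T, ∀ x ∈ V, f^[t] x ∉ W

section top
variable [Finite A] [TopologicalSpace A] [DiscreteTopology A] {f : (ℤ → A) → (ℤ → A)}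

omit [Finite A] [DiscreteTopology A] in
lemma realm_of_eventually {W : Set (ℤ → A)} (hW : IsOpen W) {x : ℤ → A}
    (h : ∃ T : ℕ, ∀ t ≥ T, f^[t] x ∉ W) : x ∈ realm f Wᶜ := by
  obtain ⟨T, hT⟩ := h
  intro y hy
  refine hW.isClosed_compl.mem_of_mapClusterPt hy ?_
  filter_upwards [eventually_ge_atTop T] with t ht using hT t ht

lemma eventually_of_realm {W C : Set (ℤ → A)} (hW : IsClosed W) (hWC : Disjoint W C) {x : ℤ → A}
    (h : x ∈ realm f C) : ∃ T : ℕ, ∀ t ≥ T, f^[t] x ∉ W := by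
  by_contra hcon
  push Not at hcon
  have hfr : ∃ᶠ t in atTop, f^[t] x ∈ W := by
    rw [frequently_atTop]; exact hcon
  obtain ⟨y, hy, hcl⟩ := hW.isCompact.exists_mapClusterPt_of_frequently hfr
  exact Set.disjoint_left.1 hWC hy (h hcl)

/-- if `W` misses the generic limit set then it is avoided on a subcylinder. -/
lemma avoid_of_disjoint (hf : Continuous f) {W : Set (ℤ → A)} {m : ℕ} (hW : DepOn W m)
    (hd : Disjoint W (genLimitSet f)) (p : ℤ → A) (c : ℕ) :
    ∃ (q : ℤ → A) (d : ℕ), c ≤ d ∧ Bx q d ⊆ Bx p c ∧ Avoid f W (Bx q d) := by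
  have hR : {x | ∃ T : ℕ, ∀ t ≥ T, f^[t] x ∉ W} ∈ residual (ℤ → A) := by
    have h1 : W ∩ ⋂ C : {C : Set (ℤ → A) | IsClosed C ∧ realm f C ∈ residual (ℤ → A)}, C.1 = ∅ := by
      rw [← Set.sInter_eq_iInter]
      exact Set.disjoint_iff_inter_eq_empty.1 hd
    obtain ⟨u, hu⟩ := hW.isClosed.isCompact.elim_finite_subfamily_closed _ (fun C => C.2.1) h1
    have h2 : (⋂ C ∈ u, realm f C.1) ∈ residual (ℤ → A) := by
      rw [Filter.biInter_finset_mem]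
      exact fun C _ => C.2.2
    filter_upwards [h2] with x hx
    refine eventually_of_realm (C := ⋂ C ∈ u, C.1) hW.isClosed
      (Set.disjoint_iff_inter_eq_empty.2 hu) ?_
    intro y hy
    simp only [Set.mem_iInter] at hx ⊢
    exact fun C hC => hx C hC hy
  set F : ℕ → Set (ℤ → A) := fun T => {x | ∀ t ≥ T, f^[t] x ∉ W} with hF
  have hFc : ∀ T, IsClosed (F T) := by
    intro T
    have : F T = ⋂ t ≥ T, (f^[t]) ⁻¹' Wᶜ := by ext x; simp [hF]
    rw [this]
    exact isClosed_biInter fun t _ => (hW.isOpen.isClosed_compl).preimage (hf.iterate t)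
  have key : ∃ T, (interior (F T) ∩ Bx p c).Nonempty := by
    by_contra hcon
    push Not at hcon
    have hG : ∀ T, (F T)ᶜ ∪ (Bx p c)ᶜ ∈ residual (ℤ → A) := by
      intro T
      have hcl : IsClosed (Bx p c) := by
        have : DepOn (Bx p c) c := fun x hx y hy i h1 h2 => (hy i h1 h2).trans (hx i h1 h2)
        exact this.isClosed
      refine residual_of_dense_open ((hFc T).isOpen_compl.union hcl.isOpen_compl) ?_
      rw [← Set.compl_inter, ← interior_eq_empty_iff_dense_compl, interior_inter,
        (Bx_open p c).interior_eq]
      exact hcon T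
    have h3 : (⋂ T, ((F T)ᶜ ∪ (Bx p c)ᶜ)) ∈ residual (ℤ → A) := countable_iInter_mem.2 hG
    have h4 := dense_of_mem_residual (Filter.inter_mem hR h3)
    obtain ⟨x, hx, ⟨T, hT⟩, hx2⟩ := h4.inter_open_nonempty _ (Bx_open p c) ⟨p, Bx_self p c⟩
    have := Set.mem_iInter.1 hx2 T
    rcases this with h | h
    · exact h hT
    · exact h hx
  obtain ⟨T, q, hq1, hq2⟩ := key
  obtain ⟨d, hd⟩ := exists_Bx (isOpen_interior.inter (Bx_open p c)) ⟨hq1, hq2⟩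
  refine ⟨q, max c d, le_max_left _ _, ?_, T, ?_⟩
  · exact (Bx_mono q (le_max_right _ _)).trans (hd.trans Set.inter_subset_right)
  · intro t ht x hx
    exact interior_subset (hd (Bx_mono q (le_max_right _ _) hx)).1 t ht

omit [Finite A] in
/-- if every cylinder has a subcylinder avoiding `W` then `W` misses the generic limit set. -/
lemma disjoint_of_avoid {W : Set (ℤ → A)} {m : ℕ} (hW : DepOn W m)
    (h : ∀ (p : ℤ → A) (c : ℕ), ∃ (q : ℤ → A) (d : ℕ), Bx q d ⊆ Bx p c ∧ Avoid f W (Bx q d)) :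
    Disjoint W (genLimitSet f) := by
  have hR : realm f Wᶜ ∈ residual (ℤ → A) := by
    have ho : IsOpen (⋃ V ∈ {V : Set (ℤ → A) | IsOpen V ∧ Avoid f W V}, V) :=
      isOpen_biUnion fun V hV => hV.1
    refine Filter.mem_of_superset (residual_of_dense_open ho ?_) ?_
    · rw [dense_iff_inter_open]
      rintro U hU ⟨p, hp⟩
      obtain ⟨c, hc⟩ := exists_Bx hU hp
      obtain ⟨q, d, h1, h2⟩ := h p c
      refine ⟨q, hc (h1 (Bx_self q d)), ?_⟩
      simp only [Set.mem_iUnion]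
      exact ⟨_, ⟨Bx_open q d, h2⟩, Bx_self q d⟩
    · intro x hx
      simp only [Set.mem_iUnion] at hx
      obtain ⟨V, ⟨_, T, hT⟩, hxV⟩ := hx
      exact realm_of_eventually hW.isOpen ⟨T, fun t ht => hT t ht x hxV⟩
  rw [Set.disjoint_left]
  intro y hy hyg
  exact hyg Wᶜ ⟨hW.isOpen.isClosed_compl, hR⟩ hy

omit [Finite A] [DiscreteTopology A] in
/-- conjugation invariance -/
lemma genLimitSet_conj {f g : (ℤ → A) → (ℤ → A)} (S : (ℤ → A) ≃ₜ (ℤ → A))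
    (hS : ∀ x, S (f x) = g (S x)) {y : ℤ → A} (hy : y ∈ genLimitSet f) :
    S y ∈ genLimitSet g := by
  rintro C ⟨hC, hCr⟩
  refine hy (S ⁻¹' C) ⟨hC.preimage S.continuous, ?_⟩
  have h1 := tendsto_residual_of_isOpenMap S.continuous S.isOpenMap hCr
  refine Filter.mem_of_superset h1 ?_
  intro x hx z hz
  apply hx
  have h2 : ∀ t, S (f^[t] x) = g^[t] (S x) := fun t => by
    exact (Function.Semiconj.iterate_right (f := S) (fun x => hS x) t) x
  have h3 : MapClusterPt (S z) atTop (S ∘ fun t => f^[t] x) :=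
    MapClusterPt.continuousAt_comp S.continuous.continuousAt hz
  have h4 : (S ∘ fun t => f^[t] x) = fun t => g^[t] (S x) := funext h2
  rwa [h4] at h3

omit [Finite A] [DiscreteTopology A] in
lemma genLimitSet_map (hf : Continuous f) {y : ℤ → A} (hy : y ∈ genLimitSet f) :
    f y ∈ genLimitSet f := by
  rintro C ⟨hC, hCr⟩
  refine hy (f ⁻¹' C) ⟨hC.preimage hf, Filter.mem_of_superset hCr ?_⟩
  intro x hx z hz
  apply hx
  have h3 : MapClusterPt (f z) atTop (f ∘ fun t => f^[t] x) :=
    MapClusterPt.continuousAt_comp hf.continuousAt hz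
  have h4 : (f ∘ fun t => f^[t] x) = (fun t => f^[t] x) ∘ fun t => t + 1 := by
    funext t; simp [Function.iterate_succ_apply']
  rw [h4] at h3
  exact h3.of_comp (tendsto_add_atTop_nat 1)

omit [Finite A] [DiscreteTopology A] in
lemma genLimitSet_iter (hf : Continuous f) (t : ℕ) {y : ℤ → A} (hy : y ∈ genLimitSet f) :
    f^[t] y ∈ genLimitSet f := by
  induction t with
  | zero => exact hy
  | succ t ih => rw [Function.iterate_succ_apply']; exact genLimitSet_map hf ih

/-- translation -/
def tr (j : ℤ) : (ℤ → A) ≃ₜ (ℤ → A) where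
  toFun x := fun i => x (i + j)
  invFun x := fun i => x (i - j)
  left_inv x := by funext i; simp
  right_inv x := by funext i; simp
  continuous_toFun := by fun_prop
  continuous_invFun := by fun_prop

omit [Finite A] [DiscreteTopology A] in
@[simp] lemma tr_apply (j : ℤ) (x : ℤ → A) (i : ℤ) : tr j x i = x (i + j) := rfl

omit [Finite A] [DiscreteTopology A] in
lemma tr_comm (hf : IsCA f) (j : ℤ) (x : ℤ → A) : tr j (f x) = f (tr j x) := by
  have h1 : ∀ x, tr 1 (f x) = f (tr 1 x) := fun x => (congrFun hf.2 x).symm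
  have hadd : ∀ (a b : ℤ) (x : ℤ → A), tr (a + b) x = tr a (tr b x) := by
    intro a b x; funext i; simp [add_assoc]
  have hm1 : ∀ x, tr (-1) (f x) = f (tr (-1) x) := by
    intro x
    have h0 : ∀ x : ℤ → A, tr 1 (tr (-1) x) = x := by
      intro x; funext i; simp
    have h0' : ∀ x : ℤ → A, tr (-1) (tr 1 x) = x := by
      intro x; funext i; simp
    conv_lhs => rw [← h0 x, ← h1, h0']
  induction j using Int.induction_on generalizing x with
  | zero =>
    have : ∀ x : ℤ → A, tr 0 x = x := by intro x; funext i; simp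
    rw [this, this]
  | succ n ih => rw [hadd, h1, ih, ← hadd]
  | pred n ih => rw [sub_eq_add_neg, hadd, hm1, ih, ← hadd]

omit [Finite A] [DiscreteTopology A] in
lemma tr_comm_iter (hf : IsCA f) (t : ℕ) (j : ℤ) (x : ℤ → A) :
    tr j (f^[t] x) = f^[t] (tr j x) :=
  (Function.Semiconj.iterate_right (f := tr j) (fun x => tr_comm hf j x) t) x

/-- local rule radius -/
lemma exists_radius (hf : IsCA f) : ∃ r : ℕ, ∀ x y : ℤ → A, ∀ j : ℤ,
    (∀ i, j - r ≤ i → i ≤ j + r → x i = y i) → f x j = f y j := by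
  have h1 : ∀ x : ℤ → A, ∃ c, Bx x c ⊆ {y | f y 0 = f x 0} := fun x =>
    exists_Bx (U := {y | f y 0 = f x 0})
      ((isOpen_discrete {f x 0}).preimage ((continuous_apply 0).comp hf.1)) rfl
  choose c hc using h1
  obtain ⟨s, -, hs⟩ := isCompact_univ.elim_nhds_subcover (fun x => Bx x (c x))
    (fun x _ => (Bx_open x _).mem_nhds (Bx_self x _))
  refine ⟨s.sup c, fun x y j hxy => ?_⟩
  have h0 : ∀ x y : ℤ → A, y ∈ Bx x (s.sup c) → f x 0 = f y 0 := by
    intro x y hxy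
    have := hs (Set.mem_univ x)
    simp only [Set.mem_iUnion] at this
    obtain ⟨z, hz, hxz⟩ := this
    have hle : c z ≤ s.sup c := Finset.le_sup hz
    have hyz : y ∈ Bx z (c z) := fun i h1 h2 =>
      (hxy i (by omega) (by omega)).trans (hxz i h1 h2)
    exact (hc z hxz).trans (hc z hyz).symm
  have h2 : ∀ x, f x j = f (tr j x) 0 := by intro x; rw [← tr_comm hf]; simp
  rw [h2, h2]
  refine h0 _ _ fun i h1 h2 => ?_
  exact (hxy (i + j) (by omega) (by omega)).symm

omit [Finite A] [TopologicalSpace A] [DiscreteTopology A] in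
lemma radius_iter {r : ℕ} (hr : ∀ x y : ℤ → A, ∀ j : ℤ,
    (∀ i, j - r ≤ i → i ≤ j + r → x i = y i) → f x j = f y j) (t : ℕ) :
    ∀ x y : ℤ → A, ∀ j : ℤ,
    (∀ i, j - (r * t : ℕ) ≤ i → i ≤ j + (r * t : ℕ) → x i = y i) → f^[t] x j = f^[t] y j := by
  induction t with
  | zero => intro x y j h; exact h j (by simp) (by simp)
  | succ t ih =>
    intro x y j h
    rw [Function.iterate_succ_apply', Function.iterate_succ_apply']
    rw [Nat.mul_succ] at h
    exact hr _ _ j fun i h1 h2 => ih _ _ i fun k h3 h4 => h k (by omega) (by omega)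

end top

section core
variable [Finite A] [TopologicalSpace A] [DiscreteTopology A] {f : (ℤ → A) → (ℤ → A)}

/-- right-obliqueness of `f^n` with neighborhood `[1, B]`, at each coordinate, iterated `k` times -/
def RObl (f : (ℤ → A) → (ℤ → A)) (n B : ℕ) : Prop :=
  ∀ k : ℕ, ∀ x ∈ genLimitSet f, ∀ y ∈ genLimitSet f, ∀ j : ℤ,
    (∀ i : ℤ, j + k ≤ i → i ≤ j + (k * B : ℕ) → x i = y i) → f^[n * k] x j = f^[n * k] y j

omit [Finite A] [DiscreteTopology A] in
lemma robl_of (hf : IsCA f) {n B : ℕ}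
    (h : ∀ x ∈ genLimitSet f, ∀ y ∈ genLimitSet f,
      (∀ i : ℤ, 1 ≤ i → i ≤ B → x i = y i) → f^[n] x 0 = f^[n] y 0) : RObl f n B := by
  intro k
  induction k with
  | zero => intro x _ y _ j h; exact h j (by simp) (by simp)
  | succ k ih =>
    intro x hx y hy j hxy
    rw [Nat.mul_succ, add_comm, Function.iterate_add_apply, Function.iterate_add_apply]
    have h2 : ∀ x, f^[n] x j = f^[n] (tr j x) 0 := by
      intro x; rw [← tr_comm_iter hf]; simp
    rw [h2, h2]
    refine h _ (genLimitSet_conj _ (tr_comm hf j) (genLimitSet_iter hf.1 _ hx)) _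
      (genLimitSet_conj _ (tr_comm hf j) (genLimitSet_iter hf.1 _ hy)) fun i h1 h3 => ?_
    rw [tr_apply, tr_apply]
    rw [Nat.succ_mul] at hxy
    exact ih x hx y hy (i + j) fun l h4 h5 => hxy l (by push_cast; omega) (by push_cast at *; omega)

lemma robl_pos (hf : IsCA f) {n B : ℕ} (h : RObl f n B) : ∃ n' B', 1 ≤ n' ∧ RObl f n' B' := by
  obtain ⟨r, hr⟩ := exists_radius hf
  refine ⟨n * (r + 1) + 1, (r + 1) * B + r, by omega, robl_of hf ?_⟩
  intro x hx y hy hxy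
  rw [Function.iterate_succ_apply, Function.iterate_succ_apply]
  refine h (r + 1) _ (genLimitSet_map hf.1 hx) _ (genLimitSet_map hf.1 hy) 0 fun i h1 h2 => ?_
  refine hr _ _ _ fun l h3 h4 => hxy l (by push_cast at *; omega) (by push_cast at *; omega)

/-- goodness: locally looks like a point of the generic limit set -/
def Good (f : (ℤ → A) → (ℤ → A)) (M : ℕ) : Set (ℤ → A) :=
  {x | ∃ z ∈ genLimitSet f, x ∈ Bx z M}

omit [Finite A] [DiscreteTopology A] in
lemma good_dep (M : ℕ) : DepOn (Good f M) M := by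
  rintro x ⟨z, hz, hx⟩ y hy
  exact ⟨z, hz, fun i h1 h2 => (hy i h1 h2).trans (hx i h1 h2)⟩

lemma exists_good (hf : IsCA f) (M : ℕ) (p : ℤ → A) (c : ℕ) :
    ∃ (q : ℤ → A) (d : ℕ), c ≤ d ∧ Bx q d ⊆ Bx p c ∧
      ∃ T : ℕ, ∀ t ≥ T, ∀ x ∈ Bx q d, f^[t] x ∈ Good f M := by
  have hd : Disjoint (Good f M)ᶜ (genLimitSet f) := by
    rw [Set.disjoint_left]
    exact fun x hx hxg => hx ⟨x, hxg, Bx_self x M⟩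
  obtain ⟨q, d, h1, h2, T, hT⟩ := avoid_of_disjoint hf.1 (good_dep M).compl hd p c
  exact ⟨q, d, h1, h2, T, fun t ht x hx => not_not.1 (hT t ht x hx)⟩

omit [Finite A] [DiscreteTopology A] in
/-- using obliqueness on good points -/
lemma good_obl {r n B : ℕ} (hr : ∀ x y : ℤ → A, ∀ j : ℤ,
    (∀ i, j - r ≤ i → i ≤ j + r → x i = y i) → f x j = f y j) (hob : RObl f n B)
    (k M : ℕ) {x y : ℤ → A} (hx : x ∈ Good f M) (hy : y ∈ Good f M) (j : ℤ)
    (h1 : -(M : ℤ) ≤ j - (r * (n * k) : ℕ)) (h2 : j + (r * (n * k) : ℕ) ≤ M)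
    (h3 : j + (k * B : ℕ) ≤ M)
    (hxy : ∀ i : ℤ, j + k ≤ i → i ≤ j + (k * B : ℕ) → x i = y i) :
    f^[n * k] x j = f^[n * k] y j := by
  obtain ⟨z, hz, hxz⟩ := hx
  obtain ⟨z', hz', hyz⟩ := hy
  have e1 := radius_iter hr (n * k) x z j fun i h4 h5 => hxz i (by omega) (by omega)
  have e2 := radius_iter hr (n * k) y z' j fun i h4 h5 => hyz i (by omega) (by omega)
  rw [e1, e2]
  refine hob k z hz z' hz' j fun i h4 h5 => ?_
  rw [← hxz i (by omega) (by omega), ← hyz i (by omega) (by omega)]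
  exact hxy i h4 h5

/-- one-sided blocking -/
lemma blocking (hf : IsCA f) {r n B : ℕ} (hr : ∀ x y : ℤ → A, ∀ j : ℤ,
    (∀ i, j - r ≤ i → i ≤ j + r → x i = y i) → f x j = f y j) (hn : 1 ≤ n) (hob : RObl f n B)
    (p : ℤ → A) :
    ∃ (w : ℤ → A) (C L : ℕ), ∀ x ∈ Bx w C, ∀ y ∈ Bx w C,
      (∀ i : ℤ, -(L : ℤ) ≤ i → x i = y i) → ∀ t, ∀ i : ℤ, 0 ≤ i → f^[t] x i = f^[t] y i := by
  obtain ⟨w, C, -, -, T, hT⟩ := exists_good hf (2 * (r * n) + B) p 0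
  refine ⟨w, C, r * (T + n), fun x hx y hy hxy t => ?_⟩
  induction t using Nat.strong_induction_on with
  | _ t ih =>
    intro j hj
    by_cases ht : t < T + n
    · refine radius_iter hr t x y j fun i h1 _ => hxy i ?_
      have : r * t ≤ r * (T + n) := Nat.mul_le_mul_left _ ht.le
      omega
    · obtain ⟨s, rfl⟩ : ∃ s, t = n + s := ⟨t - n, by omega⟩
      have hs := ih s (by omega)
      rw [Function.iterate_add_apply, Function.iterate_add_apply]
      by_cases hjd : ((r * n : ℕ) : ℤ) ≤ j
      · exact radius_iter hr n _ _ j fun i h1 _ => hs i (by omega)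
      · have := good_obl hr hob 1 (2 * (r * n) + B) (hT s (by omega) x hx) (hT s (by omega) y hy) j
          (by push_cast at *; simp only [mul_one]; omega)
          (by push_cast at *; simp only [mul_one]; omega)
          (by push_cast at *; simp only [one_mul]; omega) (fun i h1 _ => hs i (by push_cast at *; omega))
        simpa using this

/-- the core theorem (right-oblique case) -/
lemma core_right (hf : IsCA f) {n B : ℕ} (hob : RObl f n B) {W : Set (ℤ → A)} {m : ℕ}
    (hW : DepOn W m) (hne : ¬ Disjoint W (genLimitSet f)) (v : ℤ → A) (c0 : ℕ) :
    ¬ Avoid f W (Bx v c0) := by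
  rintro ⟨T1, hT1⟩
  obtain ⟨n, B, hn, hob⟩ := robl_pos hf hob
  obtain ⟨r, hr⟩ := exists_radius hf
  have henable : ∃ (u : ℤ → A) (c : ℕ), ∀ (q : ℤ → A) (d : ℕ), Bx q d ⊆ Bx u c →
      ¬ Avoid f W (Bx q d) := by
    by_contra hcon
    push Not at hcon
    exact hne (disjoint_of_avoid hW hcon)
  obtain ⟨u, c1, hu⟩ := henable
  obtain ⟨w, C, L, hblock⟩ := blocking hf hr hn hob v
  set c := max c0 c1 with hc
  have hc0 : c0 ≤ c := le_max_left _ _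
  have hc1 : c1 ≤ c := le_max_right _ _
  set N : ℕ := c + L + C + 1 with hN
  set D : ℕ := N + c with hD
  set k : ℕ := N + m with hk
  set Q : ℕ := N + m + k * B + r * (n * k) with hQ
  let pu : ℤ → A := fun i => if i + N ≤ c then u (i + N) else w i
  let pv : ℤ → A := fun i => if i + N ≤ c then v (i + N) else w i
  obtain ⟨q, E, hDE, hq, Tq, hTq⟩ := exists_good hf Q pu D
  have hqpu : ∀ i : ℤ, -(D : ℤ) ≤ i → i ≤ D → q i = pu i := hq (Bx_self q E)
  let p' : ℤ → A := fun i => if i < -(L : ℤ) then pv i else q i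
  obtain ⟨q', E', hEE, hq', Tq', hTq'⟩ := exists_good hf Q p' E
  have hqp' : ∀ i : ℤ, -(E : ℤ) ≤ i → i ≤ E → q' i = p' i := hq' (Bx_self q' E')
  let q'' : ℤ → A := fun i => if i < -(L : ℤ) then q i else q' i
  have hq''q : Bx q'' E' ⊆ Bx q E := by
    intro x hx i h1 h2
    rw [hx i (by omega) (by omega)]
    simp only [q'']
    split_ifs with h
    · rfl
    · rw [hqp' i h1 h2]; simp only [p', if_neg h]
  have hpvD : ∀ x ∈ Bx q' E', x ∈ Bx pv D := by
    intro x hx i h1 h2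
    rw [hx i (by omega) (by omega), hqp' i (by omega) (by omega)]
    simp only [p']
    split_ifs with h
    · rfl
    · rw [hqpu i h1 h2]
      simp only [pu, pv]
      rw [if_neg (by omega), if_neg (by omega)]
  have hpuD : ∀ x ∈ Bx q'' E', x ∈ Bx pu D := fun x hx => hq (hq''q hx)
  have huw : Bx pu D ⊆ Bx w C := by
    intro x hx i h1 h2
    rw [hx i (by omega) (by omega)]
    simp only [pu]; rw [if_neg (by omega)]
  have hvw : Bx pv D ⊆ Bx w C := by
    intro x hx i h1 h2
    rw [hx i (by omega) (by omega)]
    simp only [pv]; rw [if_neg (by omega)]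
  -- use enabling on the translated cylinder
  set T := max (max Tq Tq') T1 with hT
  have hex : ∃ t ≥ T + n * k, ∃ x ∈ Bx q'' E', f^[t] (tr (-(N : ℤ)) x) ∈ W := by
    have hsub : Bx (tr (-(N : ℤ)) q'') (E' + N) ⊆ Bx u c1 := by
      intro x hx i h1 h2
      rw [hx i (by push_cast; omega) (by push_cast; omega), tr_apply]
      have := hpuD q'' (Bx_self _ _) (i + -N) (by omega) (by omega)
      rw [this]
      simp only [pu]
      rw [if_pos (by omega)]
      congr 1; omega
    have := hu _ _ hsub
    unfold Avoid at this
    push Not at this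
    obtain ⟨t, ht, x, hx, hxW⟩ := this (T + n * k)
    refine ⟨t, ht, tr N x, ?_, ?_⟩
    · intro i h1 h2
      rw [tr_apply, hx (i + N) (by push_cast; omega) (by push_cast; omega), tr_apply]
      congr 1; omega
    · have e : tr (-(N : ℤ)) (tr N x) = x := by funext i; simp
      rw [e]; exact hxW
  obtain ⟨t, ht, x, hx, hxW⟩ := hex
  let x' : ℤ → A := fun i => if i < -(L : ℤ) then q' i else x i
  have hx' : x' ∈ Bx q' E' := by
    intro i h1 h2
    simp only [x']
    split_ifs with h
    · rfl
    · rw [hx i h1 h2]; simp only [q'', if_neg h]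
  have hagree := hblock x (huw (hpuD x hx)) x' (hvw (hpvD x' hx')) (fun i hi => by
    simp only [x']; rw [if_neg (by omega)])
  obtain ⟨s, rfl⟩ : ∃ s, t = n * k + s := ⟨t - n * k, by omega⟩
  refine hT1 (n * k + s) (by omega) (tr (-(N : ℤ)) x') ?_ ?_
  · intro i h1 h2
    rw [tr_apply, hpvD x' hx' (i + -N) (by omega) (by omega)]
    simp only [pv]
    rw [if_pos (by omega)]
    congr 1; omega
  · refine hW _ hxW ?_
    intro i h1 h2
    rw [← tr_comm_iter hf, ← tr_comm_iter hf, tr_apply, tr_apply,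
      Function.iterate_add_apply, Function.iterate_add_apply]
    symm
    refine good_obl hr hob k Q (hTq s (by omega) x (hq''q hx)) (hTq' s (by omega) x' hx') _
      (by omega) (by omega) (by omega) fun l h3 _ => hagree s l (by omega)

/-- reflection -/
def rfl' : (ℤ → A) ≃ₜ (ℤ → A) where
  toFun x := fun i => x (-i)
  invFun x := fun i => x (-i)
  left_inv x := by funext i; simp
  right_inv x := by funext i; simp
  continuous_toFun := by fun_prop
  continuous_invFun := by fun_prop

omit [Finite A] [DiscreteTopology A] in
@[simp] lemma rfl'_apply (x : ℤ → A) (i : ℤ) : rfl' x i = x (-i) := rfl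

omit [Finite A] [DiscreteTopology A] in
@[simp] lemma rfl'_rfl' (x : ℤ → A) : rfl' (rfl' x) = x := by funext i; simp

theorem core (hf : IsCA f) (hob : EventuallyOblique f (genLimitSet f)) {W : Set (ℤ → A)} {m : ℕ}
    (hW : DepOn W m) (hne : ¬ Disjoint W (genLimitSet f)) (v : ℤ → A) (c : ℕ) :
    ¬ Avoid f W (Bx v c) := by
  obtain ⟨n, a, b, hab, hside, h⟩ := hob
  rcases hside with hb | ha
  · set g : (ℤ → A) → (ℤ → A) := fun x => rfl' (f (rfl' x)) with hg
    have hfg : ∀ x, rfl' (f x) = g (rfl' x) := by intro x; simp [hg]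
    have hgf : ∀ x, rfl' (g x) = f (rfl' x) := by intro x; simp [hg]
    have hfg' : ∀ t x, rfl' (f^[t] x) = g^[t] (rfl' x) := fun t x =>
      (Function.Semiconj.iterate_right (f := rfl') (fun x => hfg x) t) x
    have hgf' : ∀ t x, rfl' (g^[t] x) = f^[t] (rfl' x) := fun t x =>
      (Function.Semiconj.iterate_right (f := rfl') (fun x => hgf x) t) x
    have hgCA : IsCA g := by
      refine ⟨rfl'.continuous.comp (hf.1.comp rfl'.continuous), ?_⟩
      funext x
      have e1 : rfl' (shift x) = tr (-1) (rfl' x) := by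
        funext i; simp [shift]; congr 1; ring
      have e2 : ∀ x : ℤ → A, rfl' (tr (-1) x) = shift (rfl' x) := by
        intro x; funext i; simp [shift]; congr 1; ring
      simp only [Function.comp, hg]
      rw [e1, ← tr_comm hf, e2]
    have hobg : RObl g n (-a).toNat := by
      refine robl_of hgCA ?_
      intro x hx y hy hxy
      have := h _ (genLimitSet_conj rfl' hgf hx) _ (genLimitSet_conj rfl' hgf hy) (fun i h1 h2 => by
        rw [rfl'_apply, rfl'_apply]
        exact hxy (-i) (by omega) (by omega))
      rw [← hgf', ← hgf'] at this
      simpa using this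
    have hWg : DepOn (rfl' ⁻¹' W) m := by
      intro x hx y hy
      refine hW _ hx fun i h1 h2 => ?_
      exact hy (-i) (by omega) (by omega)
    intro hav
    refine core_right hgCA hobg hWg ?_ (rfl' v) c ?_
    · rw [Set.not_disjoint_iff] at hne ⊢
      obtain ⟨y, hy1, hy2⟩ := hne
      exact ⟨rfl' y, by simpa using hy1, genLimitSet_conj rfl' hfg hy2⟩
    · obtain ⟨T, hT⟩ := hav
      refine ⟨T, fun t ht x hx => ?_⟩
      rw [Set.mem_preimage, hgf']
      refine hT t ht _ fun i h1 h2 => ?_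
      have := hx (-i) (by omega) (by omega)
      simpa using this
  · refine core_right hf (n := n) (B := b.toNat) (robl_of hf ?_) hW hne v c
    intro x hx y hy hxy
    exact h x hx y hy fun i h1 h2 => hxy i (by omega) (by omega)

end core

section comp

lemma word_def (x : ℤ → A) (i : ℤ) (n : ℕ) :
    word x i n = (List.range n).map fun k : ℕ => x (i + (k : ℤ)) := by
  unfold word
  have : ∀ l : List ℕ, (do let a ← l; pure (a : ℤ) : List ℤ) = l.map fun k : ℕ => (k : ℤ) := by
    intro l
    induction l with
    | nil => rfl
    | cons a l ih => simpa using ih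
  rw [this, List.map_map]
  rfl

lemma word_length (x : ℤ → A) (i : ℤ) (n : ℕ) : (word x i n).length = n := by simp [word_def]

lemma word_append (x : ℤ → A) (i : ℤ) (m n : ℕ) :
    word x i (m + n) = word x i m ++ word x (i + m) n := by
  simp [word_def, List.range_add, add_assoc]

lemma word_split {x : ℤ → A} {i : ℤ} {n : ℕ} {a b : List A} (h : word x i n = a ++ b) :
    word x i a.length = a ∧ word x (i + a.length) b.length = b := by
  have hn : n = a.length + b.length := by
    have := congrArg List.length h
    rwa [word_length, List.length_append] at this
  rw [hn, word_append] at h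
  exact List.append_inj h (word_length _ _ _)

lemma word_eq_iff {x y : ℤ → A} {i : ℤ} {n : ℕ} :
    word x i n = word y i n ↔ ∀ k : ℕ, k < n → x (i + k) = y (i + k) := by
  simp [word_def]

lemma exists_word [Nonempty A] (u : List A) (i : ℤ) : ∃ x : ℤ → A, word x i u.length = u := by
  obtain ⟨a0⟩ := ‹Nonempty A›
  refine ⟨fun j => u.getD (j - i).toNat a0, ?_⟩
  apply List.ext_getElem
  · simp [word_def]
  · intro k h1 h2
    simp [word_def, List.getElem?_eq_getElem h2]

/-- one CA step on words -/
def wstep {r : ℕ} (a0 : A) (F : List.Vector A (2 * r + 1) → A) (u : List A) : List A :=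
  (List.range (u.length - 2 * r)).map fun k =>
    F (List.Vector.ofFn fun i : Fin (2 * r + 1) => u.getD (k + i) a0)

/-- the local rule as a function on vectors -/
def lrule (f : (ℤ → A) → (ℤ → A)) (r : ℕ) (a0 : A) (v : List.Vector A (2 * r + 1)) : A :=
  f (fun j => v.toList.getD (j + r).toNat a0) 0

lemma wstep_word [TopologicalSpace A] {f : (ℤ → A) → (ℤ → A)} (hf : IsCA f)
    {r : ℕ} (a0 : A) (hr : ∀ x y : ℤ → A, ∀ j : ℤ,
    (∀ i, j - r ≤ i → i ≤ j + r → x i = y i) → f x j = f y j) (x : ℤ → A) (i : ℤ) (n : ℕ) :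
    wstep a0 (lrule f r a0) (word x i n) = word (f x) (i + r) (n - 2 * r) := by
  unfold wstep
  rw [word_length]
  conv_rhs => rw [word_def]
  apply List.map_congr_left
  intro k hk
  rw [List.mem_range] at hk
  have h2 : f x (i + r + k) = f (tr (i + r + k) x) 0 := by rw [← tr_comm hf]; simp
  rw [h2]
  unfold lrule
  refine hr _ _ 0 fun j h3 h4 => ?_
  have hj : (j + r).toNat < 2 * r + 1 := by omega
  have hj2 : k + (j + r).toNat < n := by omega
  simp only [List.Vector.toList_ofFn, tr_apply]
  rw [List.getD_eq_getElem _ _ (by simpa using hj)]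
  rw [List.getElem_ofFn]
  simp only
  rw [List.getD_eq_getElem _ _ (by rw [word_length]; exact hj2)]
  simp only [word_def, List.getElem_map, List.getElem_range]
  congr 1
  push_cast
  omega

lemma wstep_iter [TopologicalSpace A] {f : (ℤ → A) → (ℤ → A)} (hf : IsCA f)
    {r : ℕ} (a0 : A) (hr : ∀ x y : ℤ → A, ∀ j : ℤ,
    (∀ i, j - r ≤ i → i ≤ j + r → x i = y i) → f x j = f y j) (x : ℤ → A) (i : ℤ) (n t : ℕ) :
    (wstep a0 (lrule f r a0))^[t] (word x i n) = word (f^[t] x) (i + (r * t : ℕ)) (n - 2 * (r * t)) := by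
  induction t with
  | zero => simp
  | succ t ih =>
    rw [Function.iterate_succ_apply', ih, wstep_word hf a0 hr, Function.iterate_succ_apply']
    congr 1
    · push_cast; ring
    · rw [Nat.mul_succ]; omega

/-- the decidable matrix -/
def Mat {r : ℕ} (a0 : A) (F : List.Vector A (2 * r + 1) → A) (s : List A) (q : List A × ℕ)
    (z : ℕ × (List A × List A) × (List A × List A)) : Prop :=
  (q.2 ≤ z.1 ∧ z.2.1.1.length + q.2 = r * z.1 + z.2.2.1.length) ∧
    (wstep a0 F)^[z.1] (z.2.1.1 ++ (q.1 ++ z.2.1.2)) = z.2.2.1 ++ (s ++ z.2.2.2)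

lemma cylinder_dep (s : List A) : DepOn (cylinder s 0) s.length := by
  intro x hx y hy
  unfold cylinder at *
  simp only [Set.mem_ofPred_eq] at *
  rw [← hx, word_length, word_eq_iff]
  exact fun k hk => hy _ (by omega) (by omega)

theorem lang_iff [Finite A] [Nonempty A] [TopologicalSpace A] [DiscreteTopology A]
    {f : (ℤ → A) → (ℤ → A)} (hf : IsCA f) (hob : EventuallyOblique f (genLimitSet f))
    {r : ℕ} (a0 : A) (hr : ∀ x y : ℤ → A, ∀ j : ℤ,
    (∀ i, j - r ≤ i → i ≤ j + r → x i = y i) → f x j = f y j) (s : List A) :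
    s ∈ lang (genLimitSet f) ↔ ∀ q, ∃ z, Mat a0 (lrule f r a0) s q z := by
  constructor
  · rintro ⟨y, hy, i, hs⟩ ⟨p, l⟩
    have hne : ¬ Disjoint (cylinder s 0) (genLimitSet f) := by
      rw [Set.not_disjoint_iff]
      refine ⟨tr i y, ?_, genLimitSet_conj _ (tr_comm hf i) hy⟩
      show word (tr i y) 0 s.length = s
      conv_rhs => rw [← hs]
      simp [word_def, add_comm]
    obtain ⟨v, hv⟩ := exists_word p (-(l : ℤ))
    have := core hf hob (cylinder_dep s) hne v (l + p.length)
    unfold Avoid at this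
    push Not at this
    obtain ⟨t, ht, x, hx, hxs⟩ := this l
    have hxp : word x (-(l : ℤ)) p.length = p := by
      conv_rhs => rw [← hv]
      rw [word_eq_iff]
      exact fun k hk => hx _ (by omega) (by omega)
    refine ⟨⟨t, (word x (-(l : ℤ) - (r * t : ℕ)) (r * t),
      word x (-(l : ℤ) + p.length) (r * t + l + s.length)),
      (word (f^[t] x) (-(l : ℤ)) l, word (f^[t] x) s.length p.length)⟩, ⟨ht, ?_⟩, ?_⟩
    · simp only [word_length]
    · simp only
      have e1 : p ++ word x (-(l : ℤ) + p.length) (r * t + l + s.length)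
          = word x (-(l : ℤ)) (p.length + (r * t + l + s.length)) := by
        rw [word_append _ _ p.length, hxp]
      have e2 : word x (-(l : ℤ) - (r * t : ℕ)) (r * t) ++
          word x (-(l : ℤ)) (p.length + (r * t + l + s.length)) =
          word x (-(l : ℤ) - (r * t : ℕ)) (r * t + (p.length + (r * t + l + s.length))) := by
        rw [word_append _ _ (r * t), sub_add_cancel]
      rw [e1, e2, wstep_iter hf a0 hr, sub_add_cancel]
      have e3 : r * t + (p.length + (r * t + l + s.length)) - 2 * (r * t)
          = l + (s.length + p.length) := by omega
      rw [e3, word_append, neg_add_cancel, word_append, zero_add]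
      have : word (f^[t] x) 0 s.length = s := hxs
      rw [this]
  · intro h
    by_contra hs
    have hd : Disjoint (cylinder s 0) (genLimitSet f) := by
      rw [Set.disjoint_left]
      exact fun y hy1 hy2 => hs ⟨y, hy2, 0, hy1⟩
    obtain ⟨q, d, -, -, T, hT⟩ :=
      avoid_of_disjoint hf.1 (cylinder_dep s) hd (fun _ => a0) 0
    set l := max d T with hl
    obtain ⟨⟨t, ⟨u1, u3⟩, y1, y3⟩, ⟨h1, h2⟩, h3⟩ := h (word q (-(l : ℤ)) (2 * l + 1), l)
    simp only at h1 h2 h3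
    obtain ⟨x, hx⟩ := exists_word (u1 ++ (word q (-(l : ℤ)) (2 * l + 1) ++ u3))
      (-(l : ℤ) - u1.length)
    rw [← hx, wstep_iter hf a0 hr] at h3
    have h4 := (word_split (word_split h3).2).1
    have h5 := (word_split (word_split hx).2).1
    rw [sub_add_cancel, word_length, word_eq_iff] at h5
    refine hT t (by omega) x (fun i h6 h7 => ?_) ?_
    · have := h5 (i + l).toNat (by omega)
      have e : -(l : ℤ) + ((i + l).toNat : ℤ) = i := by omega
      rwa [e] at this
    · show word (f^[t] x) 0 s.length = s
      have e : -(l : ℤ) - u1.length + (r * t : ℕ) + y1.length = 0 := by omega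
      rwa [e] at h4

lemma wstep_primrec [Finite A] [Primcodable A] {r : ℕ} (a0 : A)
    (F : List.Vector A (2 * r + 1) → A) : Primrec (wstep a0 F) := by
  unfold wstep
  refine Primrec.list_map (Primrec.list_range.comp
    (Primrec.nat_sub.comp Primrec.list_length (Primrec.const _))) ?_
  refine (Primrec.dom_finite F).comp (Primrec.vector_ofFn fun i => ?_)
  exact (Primrec.list_getD a0).comp Primrec.fst
    (Primrec.nat_add.comp Primrec.snd (Primrec.const _))

lemma mat_primrec [Finite A] [Primcodable A] {r : ℕ} (a0 : A)
    (F : List.Vector A (2 * r + 1) → A) :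
    PrimrecPred fun c : (List A × (List A × ℕ)) × (ℕ × (List A × List A) × (List A × List A)) =>
      Mat a0 F c.1.1 c.1.2 c.2 := by
  have hs : Primrec fun c : (List A × (List A × ℕ)) ×
      (ℕ × (List A × List A) × (List A × List A)) => c.1.1 := Primrec.fst.comp Primrec.fst
  have hq : Primrec fun c : (List A × (List A × ℕ)) ×
      (ℕ × (List A × List A) × (List A × List A)) => c.1.2 := Primrec.snd.comp Primrec.fst
  have ht : Primrec fun c : (List A × (List A × ℕ)) ×
      (ℕ × (List A × List A) × (List A × List A)) => c.2.1 := Primrec.fst.comp Primrec.snd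
  have hu : Primrec fun c : (List A × (List A × ℕ)) ×
      (ℕ × (List A × List A) × (List A × List A)) => c.2.2.1 :=
    Primrec.fst.comp (Primrec.snd.comp Primrec.snd)
  have hy : Primrec fun c : (List A × (List A × ℕ)) ×
      (ℕ × (List A × List A) × (List A × List A)) => c.2.2.2 :=
    Primrec.snd.comp (Primrec.snd.comp Primrec.snd)
  unfold Mat
  refine ((Primrec.nat_le.comp (Primrec.snd.comp hq) ht).and ?_).and ?_
  · exact Primrec.eq.comp
      (Primrec.nat_add.comp (Primrec.list_length.comp (Primrec.fst.comp hu)) (Primrec.snd.comp hq))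
      (Primrec.nat_add.comp (Primrec.nat_mul.comp (Primrec.const r) ht)
        (Primrec.list_length.comp (Primrec.fst.comp hy)))
  · refine Primrec.eq.comp (Primrec.nat_iterate ht ?_ ?_) ?_
    · exact Primrec.list_append.comp (Primrec.fst.comp hu)
        (Primrec.list_append.comp (Primrec.fst.comp hq) (Primrec.snd.comp hu))
    · exact (wstep_primrec a0 F).comp Primrec.snd
    · exact Primrec.list_append.comp (Primrec.fst.comp hy)
        (Primrec.list_append.comp hs (Primrec.snd.comp hy))

lemma natSigma_two {X Y Z : Type*} [Primcodable X] [Primcodable Y] [Primcodable Z]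
    {Q : X → Y → Z → Prop} (hQ : PrimrecPred fun c : (X × Y) × Z => Q c.1.1 c.1.2 c.2) :
    NatSigma 2 (fun m => ∃ w : X, Encodable.encode w = m ∧ ∃ y, ∀ z, ¬ Q w y z) := by
  classical
  let R : ℕ → Prop := fun b => ∃ w : X, Encodable.encode w = b.unpair.1 ∧
    ∃ y : Y, Encodable.decode b.unpair.2 = some y ∧ ∀ z, ¬ Q w y z
  let Dd : ℕ → Option ((X × Y) × Z) := fun n => Encodable.decode n
  let g : ℕ → Bool := fun n =>
    Option.casesOn (Encodable.decode (α := X) n.unpair.1.unpair.1) true fun w =>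
      bif decide (Encodable.encode w = n.unpair.1.unpair.1) then
        Option.casesOn (Encodable.decode (α := Y) n.unpair.1.unpair.2) true fun y =>
          Option.casesOn (Encodable.decode (α := Z) n.unpair.2) false fun z => decide (Q w y z)
      else true
  have hg : Primrec g := by
    have h1 : Primrec fun n : ℕ => n.unpair.1 := Primrec.fst.comp Primrec.unpair
    have h2 : Primrec fun n : ℕ => n.unpair.2 := Primrec.snd.comp Primrec.unpair
    refine Primrec.option_casesOn (Primrec.decode.comp (h1.comp h1)) (Primrec.const _) ?_
    refine Primrec.cond ?_ ?_ (Primrec.const _)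
    · exact (Primrec.eq.comp (Primrec.encode.comp Primrec.snd)
        ((h1.comp h1).comp Primrec.fst)).decide
    refine Primrec.option_casesOn (Primrec.decode.comp ((h2.comp h1).comp Primrec.fst))
      (Primrec.const _) ?_
    refine Primrec.option_casesOn (Primrec.decode.comp (h2.comp (Primrec.fst.comp Primrec.fst)))
      (Primrec.const _) ?_
    exact hQ.decide.comp (((Primrec.snd.comp (Primrec.fst.comp Primrec.fst)).pair
      (Primrec.snd.comp Primrec.fst)).pair Primrec.snd)
  refine ⟨R, ⟨fun n => g n = true, ?_, ?_⟩, ?_⟩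
  · have : PrimrecPred fun n => ¬ g n = true := (Primrec.eq.comp hg (Primrec.const true)).not
    exact ⟨fun n => Classical.propDecidable _,
      (@PrimrecPred.decide _ _ _ (fun n => Classical.propDecidable _) this).to_comp⟩
  · intro b
    simp only [g, R, Nat.unpair_pair]
    rcases hw : Encodable.decode (α := X) b.unpair.1 with _ | w
    · simp only [exists_const, iff_true]
      rintro ⟨w, hw', -⟩
      rw [← hw', Encodable.encodek] at hw
      cases hw
    · by_cases he : Encodable.encode w = b.unpair.1
      · simp only [he, decide_true, cond_true]
        rcases hy : Encodable.decode (α := Y) b.unpair.2 with _ | y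
        · simp
        · simp only [Option.some.injEq, exists_eq_left']
          constructor
          · intro h
            have : ∃ z, Q w y z := by
              by_contra hcon
              push Not at hcon
              exact h ⟨w, he, hcon⟩
            obtain ⟨z, hz⟩ := this
            refine ⟨Encodable.encode z, ?_⟩
            simp [Encodable.encodek, hz]
          · rintro ⟨k, hk⟩ ⟨w', hw', hall⟩
            have hww : w' = w := Encodable.encode_injective (hw'.trans he.symm)
            subst hww
            rcases hz : Encodable.decode (α := Z) k with _ | z
            · rw [hz] at hk; simp at hk
            · rw [hz] at hk
              exact hall z (by simpa using hk)
      · simp only [he, decide_false, cond_false, exists_const, iff_true]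
        rintro ⟨w', hw', -⟩
        rw [← hw', Encodable.encodek] at hw
        cases hw
        exact he hw'
  · intro a
    simp only [R, Nat.unpair_pair]
    constructor
    · rintro ⟨w, hw, y, hy⟩
      exact ⟨Encodable.encode y, w, hw, y, Encodable.encodek y, hy⟩
    · rintro ⟨k, w, hw, y, -, hy⟩
      exact ⟨w, hw, y, hy⟩

end comp

end Helpers

/-- if the restriction of `f` to `ω̃(f)` is eventually oblique, then the
language of `ω̃(f)` is `Π⁰₂`. -/
theorem stmt10 [Fintype A] [Nonempty A] [Primcodable A] [TopologicalSpace A]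
    [DiscreteTopology A] (f : (ℤ → A) → (ℤ → A)) (hf : IsCA f)
    (hob : EventuallyOblique f (genLimitSet f)) :
    PiLang 2 (lang (genLimitSet f)) := by
  obtain ⟨r, hr⟩ := exists_radius hf
  obtain ⟨a0⟩ := ‹Nonempty A›
  have : Nonempty A := ⟨a0⟩
  have h := natSigma_two (mat_primrec a0 (lrule f r a0))
  have e : {w : List A | w ∉ lang (genLimitSet f)} =
      {w | ∃ q, ∀ z, ¬ Mat a0 (lrule f r a0) w q z} := by
    ext w
    simp only [Set.mem_ofPred_eq]
    rw [lang_iff hf hob a0 hr w]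
    push Not
    rfl
  unfold PiLang SigmaLang
  rw [e]
  exact h

end Gls
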